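/- arXiv:2405.03664 — 4 statements merged into one kernel-verified Lean document; each statement's English description precedes it below -/
import Mathlib

section
/- For any Borel probability measures μ, ν, κ on X and any p ≥ 1 and k ≥ 0, the (p,k)-RPW distance satisfies the triangle inequality: RPW_{p,k}(μ, ν) ≤ RPW_{p,k}(μ, κ) + RPW_{p,k}(κ, ν). -/
open MeasureTheory

noncomputable section

/-- `γ` is an `α`-partial transport plan from `μ` to `ν`: a Borel measure on `X × X` of
total mass `α` whose first marginal is dominated by `μ` and second marginal by `ν`. -/
def IsPartialPlan {X : Type*} [MeasurableSpace X] (μ ν : Measure X) (α : ℝ)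
    (γ : Measure (X × X)) : Prop :=
  γ Set.univ = ENNReal.ofReal α ∧ γ.map Prod.fst ≤ μ ∧ γ.map Prod.snd ≤ ν

/-- The cost `w_p(γ) = (∫ c(x,y)^p dγ)^(1/p)` of a transport plan. -/
def planCost {X : Type*} [MetricSpace X] [MeasurableSpace X] (p : ℝ)
    (γ : Measure (X × X)) : ℝ :=
  (∫ z, dist z.1 z.2 ^ p ∂γ) ^ (1 / p)

/-- The `α`-partial `p`-Wasserstein distance `W_{p,α}(μ, ν)`. -/
def partialW {X : Type*} [MetricSpace X] [MeasurableSpace X] (p α : ℝ)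
    (μ ν : Measure X) : ℝ :=
  sInf { c : ℝ | ∃ γ : Measure (X × X), IsPartialPlan μ ν α γ ∧ c = planCost p γ }

/-- The `(p,k)`-RPW distance: the least `ε ∈ [0,1]` with `W_{p,1-ε}(μ,ν) ≤ kε`. -/
def RPW {X : Type*} [MetricSpace X] [MeasurableSpace X] (p k : ℝ)
    (μ ν : Measure X) : ℝ :=
  sInf { ε : ℝ | ε ∈ Set.Icc (0:ℝ) 1 ∧ partialW p (1 - ε) μ ν ≤ k * ε }

open ProbabilityTheory in
theorem rpw_compProd_mono {X Y : Type*} [MeasurableSpace X] [MeasurableSpace Y]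
    {a b : Measure X} [IsFiniteMeasure a] [IsFiniteMeasure b] (h : a ≤ b)
    (K : Kernel X Y) [IsMarkovKernel K] :
    a ⊗ₘ K ≤ b ⊗ₘ K := by
  refine Measure.le_iff.2 fun s hs => ?_
  rw [Measure.compProd_apply hs, Measure.compProd_apply hs]
  exact lintegral_mono' h le_rfl

theorem rpw_exists_common {X : Type*} [MeasurableSpace X] (κ κ1 κ2 : Measure X)
    [IsProbabilityMeasure κ] (h1 : κ1 ≤ κ) (h2 : κ2 ≤ κ) (e1 e2 : ℝ)
    (he1 : 0 ≤ e1) (he2 : 0 ≤ e2) (h : e1 + e2 < 1)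
    (m1 : κ1 Set.univ = ENNReal.ofReal (1 - e1)) (m2 : κ2 Set.univ = ENNReal.ofReal (1 - e2)) :
    ∃ l : Measure X, l ≤ κ1 ∧ l ≤ κ2 ∧ l Set.univ = ENNReal.ofReal (1 - (e1 + e2)) := by
  have : IsFiniteMeasure κ1 := isFiniteMeasure_of_le κ h1
  have : IsFiniteMeasure κ2 := isFiniteMeasure_of_le κ h2
  obtain ⟨t, ht, ha, hb⟩ := hahn_decomposition κ2 κ1
  have hd1 : κ1.restrict t ≤ κ2.restrict t := by
    refine Measure.le_iff.2 fun s hs => ?_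
    rw [Measure.restrict_apply hs, Measure.restrict_apply hs]
    exact ha _ (hs.inter ht) Set.inter_subset_right
  have hd2 : κ2.restrict tᶜ ≤ κ1.restrict tᶜ := by
    refine Measure.le_iff.2 fun s hs => ?_
    rw [Measure.restrict_apply hs, Measure.restrict_apply hs]
    exact hb _ (hs.inter ht.compl) Set.inter_subset_right
  set l0 := κ1.restrict t + κ2.restrict tᶜ with hl0
  have hl1 : l0 ≤ κ1 :=
    (add_le_add le_rfl hd2).trans_eq (Measure.restrict_add_restrict_compl ht)
  have hl2 : l0 ≤ κ2 :=
    (add_le_add hd1 le_rfl).trans_eq (Measure.restrict_add_restrict_compl ht)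
  have hm : ENNReal.ofReal (1 - (e1 + e2)) ≤ l0 Set.univ := by
    refine ENNReal.ofReal_le_of_le_toReal ?_
    have q : (l0 Set.univ).toReal = κ1.real t + κ2.real tᶜ := by
      rw [hl0, Measure.add_apply, Measure.restrict_apply_univ, Measure.restrict_apply_univ,
        ENNReal.toReal_add (measure_ne_top _ _) (measure_ne_top _ _)]
      rfl
    have q1 : κ1.real t + κ1.real tᶜ = 1 - e1 := by
      rw [measureReal_add_measureReal_compl ht, measureReal_def, m1,
        ENNReal.toReal_ofReal (by linarith)]
    have q2 : κ2.real t + κ2.real tᶜ = 1 - e2 := by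
      rw [measureReal_add_measureReal_compl ht, measureReal_def, m2,
        ENNReal.toReal_ofReal (by linarith)]
    have q3 : κ.real t + κ.real tᶜ = 1 := by
      rw [measureReal_add_measureReal_compl ht, probReal_univ]
    have q4 : κ1.real tᶜ ≤ κ.real tᶜ := ENNReal.toReal_mono (measure_ne_top _ _) (h1 _)
    have q5 : κ2.real t ≤ κ.real t := ENNReal.toReal_mono (measure_ne_top _ _) (h2 _)
    rw [q]; linarith
  have : IsFiniteMeasure l0 := isFiniteMeasure_of_le κ1 hl1
  have hpos : l0 Set.univ ≠ 0 := by
    have : 0 < ENNReal.ofReal (1 - (e1 + e2)) := ENNReal.ofReal_pos.2 (by linarith)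
    exact (this.trans_le hm).ne'
  set r := ENNReal.ofReal (1 - (e1 + e2)) / l0 Set.univ with hr
  have hr1 : r ≤ 1 := ENNReal.div_le_of_le_mul (by simpa using hm)
  have hle : r • l0 ≤ l0 := by
    refine Measure.le_iff.2 fun s _ => ?_
    rw [Measure.smul_apply, smul_eq_mul]
    exact mul_le_of_le_one_left (by simp) hr1
  refine ⟨r • l0, hle.trans hl1, hle.trans hl2, ?_⟩
  rw [Measure.smul_apply, smul_eq_mul, hr, ENNReal.div_mul_cancel hpos (measure_ne_top _ _)]

theorem rpw_cost_eq {X : Type*} [MetricSpace X] [CompactSpace X] [MeasurableSpace X] [BorelSpace X]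
    (hdiam : ∀ a b : X, dist a b ≤ 1) (p : ℝ) (hp : 1 ≤ p) (γ : Measure (X × X))
    [IsFiniteMeasure γ] :
    eLpNorm (fun z : X × X => dist z.1 z.2) (ENNReal.ofReal p) γ = ENNReal.ofReal (planCost p γ) := by
  have hm : MemLp (fun z : X × X => dist z.1 z.2) (ENNReal.ofReal p) γ := by
    refine MemLp.of_bound (by fun_prop) 1 (Filter.Eventually.of_forall fun z => ?_)
    simpa using hdiam z.1 z.2
  rw [hm.eLpNorm_eq_integral_rpow_norm (by simp; linarith) (by simp)]
  simp [planCost, ENNReal.toReal_ofReal (by linarith : (0:ℝ) ≤ p)]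

theorem rpw_planCost_nonneg {X : Type*} [MetricSpace X] [MeasurableSpace X] (p : ℝ)
    (γ : Measure (X × X)) : 0 ≤ planCost p γ := by
  unfold planCost
  exact Real.rpow_nonneg (integral_nonneg fun z => Real.rpow_nonneg dist_nonneg _) _

theorem rpw_bddBelow {X : Type*} [MetricSpace X] [MeasurableSpace X] (p α : ℝ)
    (μ ν : Measure X) :
    BddBelow { c : ℝ | ∃ γ : Measure (X × X), IsPartialPlan μ ν α γ ∧ c = planCost p γ } :=
  ⟨0, by rintro c ⟨γ, _, rfl⟩; exact rpw_planCost_nonneg p γ⟩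

theorem rpw_nonempty {X : Type*} [MetricSpace X] [MeasurableSpace X] (p α : ℝ)
    (h1 : α ≤ 1) (μ ν : Measure X) [IsProbabilityMeasure μ] [IsProbabilityMeasure ν] :
    { c : ℝ | ∃ γ : Measure (X × X), IsPartialPlan μ ν α γ ∧ c = planCost p γ }.Nonempty := by
  have hr : ENNReal.ofReal α ≤ 1 := by simpa using h1
  have key : ∀ m : Measure X, ENNReal.ofReal α • m ≤ m := fun m => by
    refine Measure.le_iff.2 fun s _ => ?_
    rw [Measure.smul_apply, smul_eq_mul]
    exact mul_le_of_le_one_left (by simp) hr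
  refine ⟨_, ENNReal.ofReal α • μ.prod ν, ⟨?_, ?_, ?_⟩, rfl⟩
  · simp
  · rw [Measure.map_smul, Measure.map_fst_prod]; simpa using key μ
  · rw [Measure.map_smul, Measure.map_snd_prod]; simpa using key ν

open ProbabilityTheory in
theorem rpw_glue {X : Type*} [MetricSpace X] [CompactSpace X] [MeasurableSpace X] [BorelSpace X]
    (hdiam : ∀ a b : X, dist a b ≤ 1)
    (μ ν κ : Measure X)
    [IsProbabilityMeasure μ] [IsProbabilityMeasure ν] [IsProbabilityMeasure κ]
    (p : ℝ) (hp : 1 ≤ p) (e1 e2 : ℝ) (he1 : 0 ≤ e1) (he2 : 0 ≤ e2) (h : e1 + e2 < 1)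
    (γ1 γ2 : Measure (X × X)) (H1 : IsPartialPlan μ κ (1 - e1) γ1)
    (H2 : IsPartialPlan κ ν (1 - e2) γ2) :
    ∃ γ, IsPartialPlan μ ν (1 - (e1 + e2)) γ ∧ planCost p γ ≤ planCost p γ1 + planCost p γ2 := by
  obtain ⟨a1, b1, c1⟩ := H1
  obtain ⟨a2, b2, c2⟩ := H2
  have : IsFiniteMeasure γ1 := ⟨by rw [a1]; simp⟩
  have : IsFiniteMeasure γ2 := ⟨by rw [a2]; simp⟩
  have : Nonempty X := nonempty_of_isProbabilityMeasure μ
  set σ := γ1.map Prod.swap with hσ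
  have hσf : σ.fst = γ1.map Prod.snd := by
    rw [hσ, Measure.fst, Measure.map_map measurable_fst measurable_swap]; rfl
  obtain ⟨l, l1, l2, lm⟩ := rpw_exists_common κ σ.fst γ2.fst (hσf ▸ c1) b2 e1 e2 he1 he2 h
    (by rw [hσf, Measure.map_apply measurable_snd MeasurableSet.univ]; simpa using a1)
    (by rw [Measure.fst_univ, a2])
  have : IsFiniteMeasure l := isFiniteMeasure_of_le _ l1
  set K1 := σ.condKernel
  set K2 := γ2.condKernel
  set T : Measure (X × (X × X)) := l ⊗ₘ (K1 ×ₖ K2) with hT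
  have T1 : T.map (Prod.map id Prod.fst) ≤ σ := by
    rw [hT, ← Measure.compProd_map measurable_fst, ← Kernel.fst_eq, Kernel.fst_prod]
    exact (rpw_compProd_mono l1 K1).trans_eq (σ.disintegrate _)
  have T2 : T.map (Prod.map id Prod.snd) ≤ γ2 := by
    rw [hT, ← Measure.compProd_map measurable_snd, ← Kernel.snd_eq, Kernel.snd_prod]
    exact (rpw_compProd_mono l2 K2).trans_eq (γ2.disintegrate _)
  have T1' : T.map (fun t => (t.2.1, t.1)) ≤ γ1 := by
    have := Measure.map_mono T1 (measurable_swap)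
    rw [Measure.map_map measurable_swap (by fun_prop), hσ,
      Measure.map_map measurable_swap measurable_swap] at this
    simp only [Prod.swap_swap_eq, Measure.map_id] at this
    exact this
  have T2' : T.map (fun t => (t.1, t.2.2)) ≤ γ2 := T2
  refine ⟨T.map Prod.snd, ⟨?_, ?_, ?_⟩, ?_⟩
  · rw [Measure.map_apply measurable_snd MeasurableSet.univ, Set.preimage_univ, hT,
      Measure.compProd_apply_univ, lm]
  · have := Measure.map_mono T1' measurable_fst
    rw [Measure.map_map measurable_fst (by fun_prop)] at this
    rw [Measure.map_map measurable_fst measurable_snd]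
    exact this.trans b1
  · have := Measure.map_mono T2' measurable_snd
    rw [Measure.map_map measurable_snd (by fun_prop)] at this
    rw [Measure.map_map measurable_snd measurable_snd]
    exact this.trans c2
  · have n1 := rpw_planCost_nonneg p γ1
    have n2 := rpw_planCost_nonneg p γ2
    rw [← ENNReal.ofReal_le_ofReal_iff (by positivity), ENNReal.ofReal_add n1 n2,
      ← rpw_cost_eq hdiam p hp, ← rpw_cost_eq hdiam p hp, ← rpw_cost_eq hdiam p hp]
    have m1 := eLpNorm_mono_measure (fun z : X × X => dist z.1 z.2) (p := ENNReal.ofReal p) T1'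
    have m2 := eLpNorm_mono_measure (fun z : X × X => dist z.1 z.2) (p := ENNReal.ofReal p) T2'
    rw [eLpNorm_map_measure (by fun_prop) (by fun_prop)] at m1 m2
    rw [eLpNorm_map_measure (by fun_prop) (by fun_prop)]
    refine le_trans ?_ (add_le_add m1 m2)
    refine le_trans ?_ (eLpNorm_add_le (Measurable.aestronglyMeasurable (by fun_prop))
      (Measurable.aestronglyMeasurable (by fun_prop)) (by simpa using hp))
    refine eLpNorm_mono_real fun t => ?_
    simpa using dist_triangle t.2.1 t.1 t.2.2

/-- For Borel probability measures `μ ν κ` on a compact metric space `X`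
with unit diameter, `p ≥ 1`, `k ≥ 0`, the `(p,k)`-RPW distance satisfies the triangle
inequality. -/
theorem rpw_triangle_inequality
    {X : Type*} [MetricSpace X] [CompactSpace X] [MeasurableSpace X] [BorelSpace X]
    (hdiam : ∀ a b : X, dist a b ≤ 1)
    (μ ν κ : Measure X)
    [IsProbabilityMeasure μ] [IsProbabilityMeasure ν] [IsProbabilityMeasure κ]
    (p k : ℝ) (hp : 1 ≤ p) (hk : 0 ≤ k) :
    RPW p k μ ν ≤ RPW p k μ κ + RPW p k κ ν := by
  have one_mem : ∀ (m n : Measure X), (1:ℝ) ∈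
      { ε : ℝ | ε ∈ Set.Icc (0:ℝ) 1 ∧ partialW p (1 - ε) m n ≤ k * ε } := by
    intro m n
    refine ⟨by simp, le_trans (csInf_le (rpw_bddBelow _ _ _ _)
      ⟨0, ⟨by simp, by simp [Measure.zero_le], by simp [Measure.zero_le]⟩, rfl⟩) ?_⟩
    have : planCost p (0 : Measure (X × X)) = 0 := by
      simp only [planCost, integral_zero_measure]
      exact Real.zero_rpow (by positivity)
    rw [this]; linarith
  have bdd : ∀ (m n : Measure X), BddBelow
      { ε : ℝ | ε ∈ Set.Icc (0:ℝ) 1 ∧ partialW p (1 - ε) m n ≤ k * ε } :=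
    fun m n => ⟨0, fun e he => he.1.1⟩
  have main : ∀ e1 ∈ { ε : ℝ | ε ∈ Set.Icc (0:ℝ) 1 ∧ partialW p (1 - ε) μ κ ≤ k * ε },
      ∀ e2 ∈ { ε : ℝ | ε ∈ Set.Icc (0:ℝ) 1 ∧ partialW p (1 - ε) κ ν ≤ k * ε },
      RPW p k μ ν ≤ e1 + e2 := by
    rintro e1 ⟨⟨h10, h11⟩, h1⟩ e2 ⟨⟨h20, h21⟩, h2⟩
    rcases le_or_gt 1 (e1 + e2) with h | h
    · exact (csInf_le (bdd _ _) (one_mem _ _)).trans h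
    refine csInf_le (bdd _ _) ⟨⟨by linarith, h.le⟩, ?_⟩
    refine le_of_forall_pos_le_add fun δ hδ => ?_
    obtain ⟨_, ⟨γ1, H1, rfl⟩, hc1⟩ := exists_lt_of_csInf_lt
      (rpw_nonempty p (1 - e1) (by linarith) μ κ)
      (show partialW p (1 - e1) μ κ < k * e1 + δ / 2 by linarith)
    obtain ⟨_, ⟨γ2, H2, rfl⟩, hc2⟩ := exists_lt_of_csInf_lt
      (rpw_nonempty p (1 - e2) (by linarith) κ ν)
      (show partialW p (1 - e2) κ ν < k * e2 + δ / 2 by linarith)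
    obtain ⟨γ, H, hc⟩ := rpw_glue hdiam μ ν κ p hp e1 e2 h10 h20 h γ1 γ2 H1 H2
    have : partialW p (1 - (e1 + e2)) μ ν ≤ planCost p γ :=
      csInf_le (rpw_bddBelow _ _ _ _) ⟨γ, H, rfl⟩
    linarith
  have s1 : ∀ e1 ∈ { ε : ℝ | ε ∈ Set.Icc (0:ℝ) 1 ∧ partialW p (1 - ε) μ κ ≤ k * ε },
      RPW p k μ ν - e1 ≤ RPW p k κ ν := fun e1 he1 =>
    le_csInf ⟨1, one_mem _ _⟩ fun e2 he2 => by linarith [main e1 he1 e2 he2]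
  have s2 : RPW p k μ ν - RPW p k κ ν ≤ RPW p k μ κ :=
    le_csInf ⟨1, one_mem _ _⟩ fun e1 he1 => by linarith [s1 e1 he1]
  linarith
end
end

section
/- For any p ≥ 1 and k ≥ 0, the (p,k)-RPW distance is a metric on the set of Borel probability measures on X: for all Borel probability measures μ, ν, κ on X, (i) RPW_{p,k}(μ, μ) = 0, (ii) RPW_{p,k}(μ, ν) > 0 whenever μ ≠ ν, (iii) RPW_{p,k}(μ, ν) = RPW_{p,k}(ν, μ), and (iv) RPW_{p,k}(μ, ν) ≤ RPW_{p,k}(μ, κ) + RPW_{p,k}(κ, ν). -/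
open MeasureTheory

noncomputable section

section helpers

open ProbabilityTheory Filter Topology
open scoped ENNReal

variable {X : Type*} [MetricSpace X] [CompactSpace X] [MeasurableSpace X] [BorelSpace X]

/-- the distance function on the product -/
def dfun (X : Type*) [MetricSpace X] : X × X → ℝ := fun z => dist z.1 z.2

lemma dfun_meas : Measurable (dfun X) := by
  unfold dfun; fun_prop

lemma dfun_memLp (hdiam : ∀ a b : X, dist a b ≤ 1) (q : ℝ≥0∞) (γ : Measure (X × X))
    [IsFiniteMeasure γ] : MemLp (dfun X) q γ := by
  refine MemLp.of_bound dfun_meas.aestronglyMeasurable 1 (ae_of_all _ fun z => ?_)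
  simpa [dfun, abs_of_nonneg dist_nonneg] using hdiam z.1 z.2

lemma planCost_eq (hdiam : ∀ a b : X, dist a b ≤ 1) {p : ℝ} (hp : 1 ≤ p) (γ : Measure (X × X))
    [IsFiniteMeasure γ] :
    ENNReal.ofReal (planCost p γ) = eLpNorm (dfun X) (ENNReal.ofReal p) γ := by
  have h0 : ENNReal.ofReal p ≠ 0 := by simp; linarith
  rw [(dfun_memLp hdiam (ENNReal.ofReal p) γ).eLpNorm_eq_integral_rpow_norm h0 (by simp)]
  rw [ENNReal.toReal_ofReal (by linarith)]
  simp [planCost, dfun, abs_of_nonneg dist_nonneg]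

lemma planCost_nonneg (p : ℝ) (γ : Measure (X × X)) : 0 ≤ planCost p γ := by
  unfold planCost
  exact Real.rpow_nonneg (integral_nonneg fun z => Real.rpow_nonneg dist_nonneg _) _

lemma bddBelow_plan (p α : ℝ) (μ ν : Measure X) :
    BddBelow { c : ℝ | ∃ γ : Measure (X × X), IsPartialPlan μ ν α γ ∧ c = planCost p γ } := by
  refine ⟨0, ?_⟩
  rintro c ⟨γ, -, rfl⟩
  exact planCost_nonneg p γ

lemma IsPartialPlan.finite {μ ν : Measure X} {α : ℝ} {γ : Measure (X × X)}
    (h : IsPartialPlan μ ν α γ) : IsFiniteMeasure γ :=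
  ⟨by rw [h.1]; exact ENNReal.ofReal_lt_top⟩

lemma exists_plan (μ ν : Measure X) [IsProbabilityMeasure μ] [IsProbabilityMeasure ν]
    {α : ℝ} (h1 : α ≤ 1) : ∃ γ : Measure (X × X), IsPartialPlan μ ν α γ := by
  refine ⟨ENNReal.ofReal α • μ.prod ν, ?_, ?_, ?_⟩
  · simp
  · rw [Measure.map_smul, Measure.map_fst_prod]
    intro s
    simp only [measure_univ, one_smul, Measure.smul_apply, smul_eq_mul]
    exact mul_le_of_le_one_left (by simp) (by simpa using h1)
  · rw [Measure.map_smul, Measure.map_snd_prod]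
    intro s
    simp only [measure_univ, one_smul, Measure.smul_apply, smul_eq_mul]
    exact mul_le_of_le_one_left (by simp) (by simpa using h1)

lemma exists_plan_lt {p : ℝ} (μ ν : Measure X) [IsProbabilityMeasure μ] [IsProbabilityMeasure ν]
    {α c : ℝ} (h1 : α ≤ 1) (h : partialW p α μ ν < c) :
    ∃ γ : Measure (X × X), IsPartialPlan μ ν α γ ∧ planCost p γ < c := by
  obtain ⟨γ, hγ⟩ := exists_plan μ ν h1
  obtain ⟨b, ⟨γ', h1, rfl⟩, h2⟩ := exists_lt_of_csInf_lt (by exact ⟨_, γ, hγ, rfl⟩) h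
  exact ⟨γ', h1, h2⟩

lemma partialW_le {p : ℝ} {μ ν : Measure X} {α : ℝ} {γ : Measure (X × X)}
    (h : IsPartialPlan μ ν α γ) : partialW p α μ ν ≤ planCost p γ :=
  csInf_le (bddBelow_plan p α μ ν) ⟨γ, h, rfl⟩

lemma rpw_bdd (p k : ℝ) (μ ν : Measure X) :
    BddBelow { ε : ℝ | ε ∈ Set.Icc (0:ℝ) 1 ∧ partialW p (1 - ε) μ ν ≤ k * ε } :=
  ⟨0, fun _ h => h.1.1⟩

lemma rpw_one {p k : ℝ} (hp : 1 ≤ p) (hk : 0 ≤ k) (μ ν : Measure X) :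
    (1:ℝ) ∈ { ε : ℝ | ε ∈ Set.Icc (0:ℝ) 1 ∧ partialW p (1 - ε) μ ν ≤ k * ε } := by
  refine ⟨by simp, ?_⟩
  have h : IsPartialPlan μ ν (1 - 1) (0 : Measure (X × X)) :=
    ⟨by simp, by simp [Measure.zero_le], by simp [Measure.zero_le]⟩
  refine (partialW_le h).trans ?_
  have : planCost p (0 : Measure (X × X)) = 0 := by
    simp only [planCost, integral_zero_measure]
    exact Real.zero_rpow (by positivity)
  rw [this]; simpa using hk

lemma rpw_nonneg (p k : ℝ) (μ ν : Measure X) : 0 ≤ RPW p k μ ν :=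
  Real.sInf_nonneg fun _ h => h.1.1

lemma rpw_self {p k : ℝ} (hp : 1 ≤ p) (μ : Measure X) [IsProbabilityMeasure μ] :
    RPW p k μ μ = 0 := by
  refine le_antisymm ?_ (rpw_nonneg p k μ μ)
  refine csInf_le (rpw_bdd p k μ μ) ⟨by simp, ?_⟩
  have hm : Measurable (fun x : X => (x, x)) := by fun_prop
  have h : IsPartialPlan μ μ (1 - 0) (μ.map (fun x => (x, x))) := by
    refine ⟨?_, ?_, ?_⟩
    · rw [Measure.map_apply hm .univ]; simp
    · rw [Measure.map_map measurable_fst hm]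
      exact (Measure.map_id (μ := μ)).le
    · rw [Measure.map_map measurable_snd hm]
      exact (Measure.map_id (μ := μ)).le
  refine (partialW_le h).trans ?_
  have hz : p ≠ 0 := by positivity
  rw [planCost, integral_map hm.aemeasurable]
  · simp [Real.zero_rpow hz, Real.zero_rpow (inv_ne_zero hz)]
  · exact ((dfun_meas (X := X)).pow_const p).aestronglyMeasurable

lemma planCost_swap (p : ℝ) (γ : Measure (X × X)) :
    planCost p (γ.map Prod.swap) = planCost p γ := by
  unfold planCost
  have hs : AEStronglyMeasurable (fun z : X × X => dist z.1 z.2 ^ p) (γ.map Prod.swap) :=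
    ((dfun_meas (X := X)).pow_const p).aestronglyMeasurable
  rw [integral_map measurable_swap.aemeasurable hs]
  simp [dist_comm]

lemma IsPartialPlan.swap {μ ν : Measure X} {α : ℝ} {γ : Measure (X × X)}
    (h : IsPartialPlan μ ν α γ) : IsPartialPlan ν μ α (γ.map Prod.swap) := by
  refine ⟨?_, ?_, ?_⟩
  · rw [Measure.map_apply measurable_swap .univ]; simpa using h.1
  · rw [Measure.map_map measurable_fst measurable_swap]; exact h.2.2
  · rw [Measure.map_map measurable_snd measurable_swap]; exact h.2.1

lemma partialW_symm (p α : ℝ) (μ ν : Measure X) : partialW p α μ ν = partialW p α ν μ := by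
  unfold partialW
  congr 1
  ext c
  constructor
  · rintro ⟨γ, h, rfl⟩
    exact ⟨_, h.swap, (planCost_swap p γ).symm⟩
  · rintro ⟨γ, h, rfl⟩
    exact ⟨_, h.swap, (planCost_swap p γ).symm⟩

lemma rpw_symm (p k : ℝ) (μ ν : Measure X) : RPW p k μ ν = RPW p k ν μ := by
  simp only [RPW, partialW_symm p _ μ ν]

lemma plan_closed (hdiam : ∀ a b : X, dist a b ≤ 1) {p : ℝ} (hp : 1 ≤ p)
    (μ ν : Measure X) [IsProbabilityMeasure μ]
    {ε c r : ℝ} (h0 : 0 ≤ ε) (h1 : ε ≤ 1) (hr : 0 < r) {γ : Measure (X × X)}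
    (h : IsPartialPlan μ ν (1 - ε) γ) (hc : planCost p γ ≤ c) {F : Set X} (hF : IsClosed F) :
    μ F ≤ ν (Metric.cthickening r F) +
      (ENNReal.ofReal ε + (ENNReal.ofReal r)⁻¹ ^ p * ENNReal.ofReal c ^ p) := by
  have := h.finite
  have hFm := hF.measurableSet
  have e1 : μ F ≤ ENNReal.ofReal ε + γ.map Prod.fst F := by
    have h2 : μ F + γ.map Prod.fst Fᶜ ≤ 1 := by
      calc μ F + γ.map Prod.fst Fᶜ ≤ μ F + μ Fᶜ := by gcongr; exact h.2.1
        _ = 1 := prob_add_prob_compl hFm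
    have h3 : γ.map Prod.fst F + γ.map Prod.fst Fᶜ = ENNReal.ofReal (1 - ε) := by
      rw [measure_add_measure_compl hFm, Measure.map_apply measurable_fst .univ]
      simpa using h.1
    have h4 : (1 : ℝ≥0∞) = ENNReal.ofReal ε + ENNReal.ofReal (1 - ε) := by
      rw [← ENNReal.ofReal_add h0 (by linarith)]; simp
    rw [h4, ← h3, ← add_assoc] at h2
    exact (ENNReal.add_le_add_iff_right (measure_ne_top _ _)).1 h2
  have e2 : γ.map Prod.fst F ≤ ν (Metric.cthickening r F) +
      γ {z | ENNReal.ofReal r ≤ ‖dfun X z‖ₑ} := by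
    rw [Measure.map_apply measurable_fst hFm]
    calc γ (Prod.fst ⁻¹' F) ≤ γ (Prod.snd ⁻¹' (Metric.cthickening r F) ∪
          {z | ENNReal.ofReal r ≤ ‖dfun X z‖ₑ}) := by
          apply measure_mono
          rintro ⟨x, y⟩ hx
          simp only [Set.mem_preimage] at hx
          by_cases hd : dist y x ≤ r
          · exact Or.inl (Metric.mem_cthickening_of_dist_le y x r F hx hd)
          · right
            simp only [Set.mem_ofPred_eq, dfun]
            rw [Real.enorm_of_nonneg dist_nonneg]
            apply ENNReal.ofReal_le_ofReal
            rw [dist_comm]; exact (not_le.1 hd).le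
      _ ≤ _ := by
          refine (measure_union_le _ _).trans ?_
          gcongr
          rw [← Measure.map_apply measurable_snd Metric.isClosed_cthickening.measurableSet]
          exact h.2.2 _
  have e3 : γ {z | ENNReal.ofReal r ≤ ‖dfun X z‖ₑ} ≤
      (ENNReal.ofReal r)⁻¹ ^ p * ENNReal.ofReal c ^ p := by
    have := meas_ge_le_mul_pow_eLpNorm_enorm γ (p := ENNReal.ofReal p) (f := dfun X)
      (by simp; linarith) (by simp) dfun_meas.aestronglyMeasurable
      (ε := ENNReal.ofReal r) (by simpa using hr) (by simp)
    rw [ENNReal.toReal_ofReal (by linarith), ← planCost_eq hdiam hp] at this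
    refine this.trans ?_
    gcongr
  calc μ F ≤ _ := e1
    _ ≤ ENNReal.ofReal ε + (ν (Metric.cthickening r F) +
      (ENNReal.ofReal r)⁻¹ ^ p * ENNReal.ofReal c ^ p) := by
        gcongr; exact e2.trans (by gcongr)
    _ = _ := by ring

lemma rpw_zero_le (hdiam : ∀ a b : X, dist a b ≤ 1) {p k : ℝ} (hp : 1 ≤ p) (hk : 0 ≤ k)
    (μ ν : Measure X) [IsProbabilityMeasure μ] [IsProbabilityMeasure ν]
    (h : RPW p k μ ν = 0) {F : Set X} (hF : IsClosed F) : μ F ≤ ν F := by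
  have key : ∀ r : ℝ, 0 < r → μ F ≤ ν (Metric.cthickening r F) := by
    intro r hr
    have b : ∀ η : ℝ, 0 < η → μ F ≤ ν (Metric.cthickening r F) +
      (ENNReal.ofReal η + (ENNReal.ofReal r)⁻¹ ^ p * ENNReal.ofReal ((k + 1) * η) ^ p) := by
      intro η hη
      have hlt : RPW p k μ ν < η := by rw [h]; exact hη
      obtain ⟨ε, ⟨⟨h0, h1⟩, hW⟩, hlt⟩ := exists_lt_of_csInf_lt ⟨1, rpw_one hp hk μ ν⟩ hlt
      have hlt2 : partialW p (1 - ε) μ ν < (k + 1) * η := by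
        nlinarith [mul_le_mul_of_nonneg_left hlt.le hk]
      obtain ⟨γ, hγ, hc⟩ := exists_plan_lt μ ν (by linarith) hlt2
      refine (plan_closed hdiam hp μ ν h0 h1 hr hγ hc.le hF).trans ?_
      gcongr
    have t : Tendsto (fun η : ℝ => ν (Metric.cthickening r F) +
      (ENNReal.ofReal η + (ENNReal.ofReal r)⁻¹ ^ p * ENNReal.ofReal ((k + 1) * η) ^ p))
      (𝓝[>] 0) (𝓝 (ν (Metric.cthickening r F) + (ENNReal.ofReal 0 +
        (ENNReal.ofReal r)⁻¹ ^ p * ENNReal.ofReal ((k + 1) * 0) ^ p))) := by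
      apply Tendsto.mono_left _ nhdsWithin_le_nhds
      refine Tendsto.add tendsto_const_nhds (Tendsto.add ?_ ?_)
      · exact ENNReal.continuous_ofReal.tendsto _
      · refine ENNReal.Tendsto.const_mul ?_ (Or.inr ?_)
        · refine (ENNReal.continuous_rpow_const (y := p)).continuousAt.tendsto.comp ?_
          exact ((ENNReal.continuous_ofReal).comp (continuous_const.mul continuous_id)).tendsto 0
        · apply ENNReal.rpow_ne_top_of_nonneg (by linarith)
          simpa using hr
    have := ge_of_tendsto t (by filter_upwards [self_mem_nhdsWithin] with η hη using b η hη)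
    simpa [ENNReal.zero_rpow_of_pos (show 0 < p by linarith)] using this
  have t := tendsto_measure_cthickening_of_isClosed (μ := ν) (s := F)
    ⟨1, one_pos, measure_ne_top _ _⟩ hF
  exact ge_of_tendsto (t.mono_left (nhdsWithin_le_nhds (s := Set.Ioi 0)))
    (by filter_upwards [self_mem_nhdsWithin] with r hr using key r hr)

lemma rpw_pos (hdiam : ∀ a b : X, dist a b ≤ 1) {p k : ℝ} (hp : 1 ≤ p) (hk : 0 ≤ k)
    (μ ν : Measure X) [IsProbabilityMeasure μ] [IsProbabilityMeasure ν]
    (hne : μ ≠ ν) : 0 < RPW p k μ ν := by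
  rcases (rpw_nonneg p k μ ν).lt_or_eq with h | h
  · exact h
  exfalso
  apply hne
  refine ext_of_generate_finite _ ?_ isPiSystem_isClosed (fun A hA ↦ ?_) (by simp)
  · rw [BorelSpace.measurable_eq (α := X), borel_eq_generateFrom_isClosed]
  · exact le_antisymm (rpw_zero_le hdiam hp hk μ ν h.symm hA)
      (rpw_zero_le hdiam hp hk ν μ (by rw [rpw_symm, ← h]) hA)

/-- common part of two submeasures, with prescribed mass -/
lemma exists_common {Y : Type*} [MeasurableSpace Y] (κ κ₁ κ₂ : Measure Y)
    [IsProbabilityMeasure κ] (h1 : κ₁ ≤ κ) (h2 : κ₂ ≤ κ) {a b : ℝ} (ha : 0 ≤ a) (hb : 0 ≤ b)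
    (hab : a + b ≤ 1) (m1 : κ₁ Set.univ = ENNReal.ofReal (1 - a))
    (m2 : κ₂ Set.univ = ENNReal.ofReal (1 - b)) :
    ∃ m : Measure Y, m ≤ κ₁ ∧ m ≤ κ₂ ∧ m Set.univ = ENNReal.ofReal (1 - (a + b)) := by
  have : IsFiniteMeasure κ₁ := ⟨by rw [m1]; exact ENNReal.ofReal_lt_top⟩
  have : IsFiniteMeasure κ₂ := ⟨by rw [m2]; exact ENNReal.ofReal_lt_top⟩
  have : IsFiniteMeasure (κ - κ₂) := isFiniteMeasure_of_le κ Measure.sub_le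
  set m0 := κ₁ - (κ - κ₂) with hm0
  have l1 : m0 ≤ κ₁ := Measure.sub_le
  have l2 : m0 ≤ κ₂ := by
    apply Measure.sub_le_of_le_add
    rw [add_comm, Measure.sub_add_cancel_of_le h2]; exact h1
  have l3 : κ₁ ≤ m0 + (κ - κ₂) := Measure.sub_le_iff_le_add.1 le_rfl
  have : IsFiniteMeasure m0 := isFiniteMeasure_of_le κ₁ l1
  have l4 : ENNReal.ofReal (1 - (a + b)) ≤ m0 Set.univ := by
    have := l3 Set.univ
    rw [Measure.add_apply, Measure.sub_apply .univ h2, m1, m2,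
      measure_univ (μ := κ)] at this
    have e : (1 : ℝ≥0∞) - ENNReal.ofReal (1 - b) = ENNReal.ofReal b := by
      rw [← ENNReal.ofReal_one, ← ENNReal.ofReal_sub _ (by linarith)]; simp
    rw [e] at this
    have e2 : ENNReal.ofReal (1 - a) = ENNReal.ofReal (1 - (a + b)) + ENNReal.ofReal b := by
      rw [← ENNReal.ofReal_add (by linarith) hb]; congr 1; ring
    rw [e2] at this
    exact (ENNReal.add_le_add_iff_right (by simp)).1 this
  by_cases hz : m0 Set.univ = 0
  · refine ⟨m0, l1, l2, ?_⟩
    rw [hz] at l4 ⊢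
    exact (le_antisymm l4 zero_le).symm
  set c := ENNReal.ofReal (1 - (a + b)) / m0 Set.univ
  have hc : c ≤ 1 := ENNReal.div_le_of_le_mul (by simpa using l4)
  have l5 : c • m0 ≤ m0 := by
    intro s
    simp only [Measure.smul_apply, smul_eq_mul]
    exact mul_le_of_le_one_left (by simp) hc
  refine ⟨c • m0, l5.trans l1, l5.trans l2, ?_⟩
  simp only [Measure.smul_apply, smul_eq_mul]
  exact ENNReal.div_mul_cancel hz (measure_ne_top _ _)

lemma compProd_mono_left' {Y Z : Type*} [MeasurableSpace Y] [MeasurableSpace Z]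
    {m m' : Measure Y} [IsFiniteMeasure m] [IsFiniteMeasure m'] (h : m ≤ m')
    (K : Kernel Y Z) [IsMarkovKernel K] : m ⊗ₘ K ≤ m' ⊗ₘ K := by
  refine Measure.le_iff.2 fun s hs => ?_
  rw [Measure.compProd_apply hs, Measure.compProd_apply hs]
  exact lintegral_mono' h le_rfl

lemma glue (hdiam : ∀ a b : X, dist a b ≤ 1) {p : ℝ} (hp : 1 ≤ p) (μ ν κ : Measure X)
    [IsProbabilityMeasure κ] {a b : ℝ} (ha : 0 ≤ a) (hb : 0 ≤ b) (hab : a + b ≤ 1)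
    {γ₁ γ₂ : Measure (X × X)} (h₁ : IsPartialPlan μ κ (1 - a) γ₁)
    (h₂ : IsPartialPlan κ ν (1 - b) γ₂) :
    ∃ γ, IsPartialPlan μ ν (1 - (a + b)) γ ∧ planCost p γ ≤ planCost p γ₁ + planCost p γ₂ := by
  have : Nonempty X := nonempty_of_isProbabilityMeasure κ
  have := h₁.finite
  have := h₂.finite
  set g₁ := γ₁.map Prod.swap with hg₁
  have hs := h₁.swap
  have : IsFiniteMeasure g₁ := hs.finite
  obtain ⟨m, hm1, hm2, hm⟩ := exists_common κ g₁.fst γ₂.fst hs.2.1 h₂.2.1 ha hb hab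
    (by rw [Measure.fst_univ]; exact hs.1) (by rw [Measure.fst_univ]; exact h₂.1)
  have : IsFiniteMeasure m := isFiniteMeasure_of_le _ hm1
  set K₁ := g₁.condKernel
  set K₂ := γ₂.condKernel
  set Γ := m ⊗ₘ (K₁ ×ₖ K₂) with hΓ
  have i1 : Γ.map (fun w => (w.1, w.2.1)) ≤ g₁ := by
    have e : Γ.map (fun w => (w.1, w.2.1)) = m ⊗ₘ K₁ := by
      have := Measure.compProd_map (μ := m) (κ := K₁ ×ₖ K₂) (f := Prod.fst) measurable_fst
      rw [← Kernel.fst_eq, Kernel.fst_prod] at this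
      rw [this]; rfl
    rw [e]
    exact (compProd_mono_left' hm1 K₁).trans (g₁.disintegrate g₁.condKernel).le
  have i2 : Γ.map (fun w => (w.1, w.2.2)) ≤ γ₂ := by
    have e : Γ.map (fun w => (w.1, w.2.2)) = m ⊗ₘ K₂ := by
      have := Measure.compProd_map (μ := m) (κ := K₁ ×ₖ K₂) (f := Prod.snd) measurable_snd
      rw [← Kernel.snd_eq, Kernel.snd_prod] at this
      rw [this]; rfl
    rw [e]
    exact (compProd_mono_left' hm2 K₂).trans (γ₂.disintegrate γ₂.condKernel).le
  have mw1 : Measurable (fun w : X × X × X => (w.1, w.2.1)) := by fun_prop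
  have mw2 : Measurable (fun w : X × X × X => (w.1, w.2.2)) := by fun_prop
  refine ⟨Γ.map Prod.snd, ⟨?_, ?_, ?_⟩, ?_⟩
  · rw [Measure.map_apply measurable_snd .univ, Set.preimage_univ, hΓ,
      Measure.compProd_apply_univ, hm]
  · refine le_trans ?_ hs.2.2
    rw [Measure.map_map measurable_fst measurable_snd]
    have := Measure.map_mono i1 (measurable_snd (α := X) (β := X))
    rw [Measure.map_map measurable_snd mw1] at this
    exact this
  · refine le_trans ?_ h₂.2.2
    rw [Measure.map_map measurable_snd measurable_snd]
    have := Measure.map_mono i2 (measurable_snd (α := X) (β := X))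
    rw [Measure.map_map measurable_snd mw2] at this
    exact this
  · rw [← planCost_swap p γ₁, ← hg₁]
    have : IsFiniteMeasure Γ := by rw [hΓ]; infer_instance
    rw [← ENNReal.ofReal_le_ofReal_iff (add_nonneg (planCost_nonneg _ _) (planCost_nonneg _ _)),
      ENNReal.ofReal_add (planCost_nonneg _ _) (planCost_nonneg _ _),
      planCost_eq hdiam hp, planCost_eq hdiam hp, planCost_eq hdiam hp]
    set q := ENNReal.ofReal p
    have hq : 1 ≤ q := by simpa [q] using hp
    rw [eLpNorm_map_measure dfun_meas.aestronglyMeasurable measurable_snd.aemeasurable]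
    calc eLpNorm (dfun X ∘ Prod.snd) q Γ
        ≤ eLpNorm ((dfun X ∘ fun w : X × X × X => (w.1, w.2.1)) +
            (dfun X ∘ fun w : X × X × X => (w.1, w.2.2))) q Γ := by
          apply eLpNorm_mono_real
          rintro ⟨y, x, z⟩
          simp only [dfun, Function.comp, Pi.add_apply, Real.norm_eq_abs, abs_of_nonneg dist_nonneg]
          exact dist_triangle_left x z y
      _ ≤ eLpNorm (dfun X ∘ fun w : X × X × X => (w.1, w.2.1)) q Γ +
            eLpNorm (dfun X ∘ fun w : X × X × X => (w.1, w.2.2)) q Γ :=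
          eLpNorm_add_le (dfun_meas.comp mw1).aestronglyMeasurable
            (dfun_meas.comp mw2).aestronglyMeasurable hq
      _ ≤ _ := by
          rw [← eLpNorm_map_measure dfun_meas.aestronglyMeasurable mw1.aemeasurable,
            ← eLpNorm_map_measure dfun_meas.aestronglyMeasurable mw2.aemeasurable]
          exact add_le_add (eLpNorm_mono_measure _ i1) (eLpNorm_mono_measure _ i2)

lemma rpw_triangle (hdiam : ∀ a b : X, dist a b ≤ 1) {p k : ℝ} (hp : 1 ≤ p) (hk : 0 ≤ k)
    (μ ν κ : Measure X) [IsProbabilityMeasure μ] [IsProbabilityMeasure ν]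
    [IsProbabilityMeasure κ] : RPW p k μ ν ≤ RPW p k μ κ + RPW p k κ ν := by
  apply le_of_forall_pos_le_add
  intro δ hδ
  obtain ⟨a, ⟨⟨ha0, ha1⟩, hWa⟩, hlta⟩ := exists_lt_of_csInf_lt ⟨1, rpw_one hp hk μ κ⟩
    (show RPW p k μ κ < RPW p k μ κ + δ / 2 by linarith)
  obtain ⟨b, ⟨⟨hb0, hb1⟩, hWb⟩, hltb⟩ := exists_lt_of_csInf_lt ⟨1, rpw_one hp hk κ ν⟩
    (show RPW p k κ ν < RPW p k κ ν + δ / 2 by linarith)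
  suffices h : RPW p k μ ν ≤ a + b by linarith
  by_cases hab : a + b ≤ 1
  · refine csInf_le (rpw_bdd p k μ ν) ⟨⟨by linarith, hab⟩, ?_⟩
    apply le_of_forall_pos_le_add
    intro η hη
    obtain ⟨γ₁, h₁, hc₁⟩ := exists_plan_lt μ κ (by linarith)
      (show partialW p (1 - a) μ κ < k * a + η / 2 by linarith)
    obtain ⟨γ₂, h₂, hc₂⟩ := exists_plan_lt κ ν (by linarith)
      (show partialW p (1 - b) κ ν < k * b + η / 2 by linarith)
    obtain ⟨γ, h, hc⟩ := glue hdiam hp μ ν κ ha0 hb0 hab h₁ h₂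
    have := partialW_le (p := p) h
    linarith
  · exact (csInf_le (rpw_bdd p k μ ν) (rpw_one hp hk μ ν)).trans (not_le.1 hab).le

end helpers

/-- For `p ≥ 1` and `k ≥ 0`, the `(p,k)`-RPW distance is a metric on
Borel probability measures on a compact metric space `X` of unit diameter. -/
theorem rpw_is_metric
    {X : Type*} [MetricSpace X] [CompactSpace X] [MeasurableSpace X] [BorelSpace X]
    (hdiam : ∀ a b : X, dist a b ≤ 1)
    (p k : ℝ) (hp : 1 ≤ p) (hk : 0 ≤ k) :
    (∀ μ : Measure X, IsProbabilityMeasure μ → RPW p k μ μ = 0) ∧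
    (∀ μ ν : Measure X, IsProbabilityMeasure μ → IsProbabilityMeasure ν →
      μ ≠ ν → 0 < RPW p k μ ν) ∧
    (∀ μ ν : Measure X, IsProbabilityMeasure μ → IsProbabilityMeasure ν →
      RPW p k μ ν = RPW p k ν μ) ∧
    (∀ μ ν κ : Measure X, IsProbabilityMeasure μ → IsProbabilityMeasure ν →
      IsProbabilityMeasure κ → RPW p k μ ν ≤ RPW p k μ κ + RPW p k κ ν) := by
  exact ⟨fun μ _ => rpw_self hp μ, fun μ ν _ _ h => rpw_pos hdiam hp hk μ ν h,
    fun μ ν _ _ => rpw_symm p k μ ν, fun μ ν κ _ _ _ => rpw_triangle hdiam hp hk μ ν κ⟩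
end
end

section
/- For any Borel probability measures ν and ν' on X, any p ≥ 1, k ≥ 0 and δ ∈ (0, 1), the (p,k)-RPW distance between ν and the contaminated distribution (1−δ)ν + δν' is at most δ: RPW_{p,k}(ν, (1−δ)ν + δν') ≤ δ. -/
open MeasureTheory

noncomputable section

/-- For Borel probability measures `ν, ν'`, `p ≥ 1`, `k ≥ 0`, and
`δ ∈ (0,1)`, the `(p,k)`-RPW distance between `ν` and `(1-δ)ν + δν'` is at most `δ`. -/
theorem rpw_contamination_le
    {X : Type*} [MetricSpace X] [CompactSpace X] [MeasurableSpace X] [BorelSpace X]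
    (hdiam : ∀ a b : X, dist a b ≤ 1)
    (ν ν' : Measure X) [IsProbabilityMeasure ν] [IsProbabilityMeasure ν']
    (p k : ℝ) (hp : 1 ≤ p) (hk : 0 ≤ k)
    (δ : ℝ) (hδ : δ ∈ Set.Ioo (0:ℝ) 1) :
    RPW p k ν (ENNReal.ofReal (1 - δ) • ν + ENNReal.ofReal δ • ν') ≤ δ := by
  obtain ⟨h0, h1⟩ := hδ
  have hp0 : p ≠ 0 := by linarith
  have hm : Measurable (fun x : X => (x, x)) := measurable_id.prodMk measurable_id
  refine csInf_le ⟨0, fun ε hε => hε.1.1⟩ ⟨⟨h0.le, h1.le⟩, ?_⟩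
  refine le_trans (csInf_le ⟨0, ?_⟩
    ⟨(ENNReal.ofReal (1 - δ) • ν).map (fun x : X => (x, x)), ⟨?_, ?_, ?_⟩, rfl⟩) ?_
  · rintro c ⟨γ, -, rfl⟩
    exact Real.rpow_nonneg
      (integral_nonneg fun z => Real.rpow_nonneg dist_nonneg p) _
  · rw [Measure.map_apply hm MeasurableSet.univ]
    simp
  · rw [Measure.map_map measurable_fst hm]
    have : (Prod.fst ∘ fun x : X => (x, x)) = id := rfl
    rw [this, Measure.map_id]
    intro s
    rw [Measure.smul_apply, smul_eq_mul]
    refine mul_le_of_le_one_left zero_le ?_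
    rw [ENNReal.ofReal_le_one]
    linarith
  · rw [Measure.map_map measurable_snd hm]
    have : (Prod.snd ∘ fun x : X => (x, x)) = id := rfl
    rw [this, Measure.map_id]
    exact Measure.le_add_right le_rfl
  · have hz : ∫ z, dist z.1 z.2 ^ p ∂((ENNReal.ofReal (1 - δ) • ν).map
        (fun x : X => (x, x))) = 0 := by
      have hd : Measurable (fun z : X × X => dist z.1 z.2 ^ p) :=
        (measurable_fst.dist measurable_snd).pow_const p
      rw [integral_map hm.aemeasurable hd.aestronglyMeasurable]
      simp [Real.zero_rpow hp0]
    unfold planCost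
    rw [hz, Real.zero_rpow (one_div_ne_zero hp0)]
    positivity
end
end

section
/- For any Borel probability measures μ and ν on X, the (∞,1)-RPW distance equals the Lévy–Prokhorov distance: RPW_{∞,1}(μ, ν) = π(μ, ν). -/
open MeasureTheory

noncomputable section

/-- The `∞`-cost `w_∞(γ)` of a transport plan: the `γ`-essential supremum of the
distance `c(x, y)`. -/
def planCostInf {X : Type*} [MetricSpace X] [MeasurableSpace X]
    (γ : Measure (X × X)) : ℝ :=
  (essSup (fun z : X × X => ENNReal.ofReal (dist z.1 z.2)) γ).toReal

/-- The `α`-partial `∞`-Wasserstein distance `W_{∞,α}(μ, ν)`. -/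
def partialWInf {X : Type*} [MetricSpace X] [MeasurableSpace X] (α : ℝ)
    (μ ν : Measure X) : ℝ :=
  sInf { c : ℝ | ∃ γ : Measure (X × X), IsPartialPlan μ ν α γ ∧ c = planCostInf γ }

/-- The `(∞,k)`-RPW distance: the least `ε ∈ [0,1]` with `W_{∞,1-ε}(μ,ν) ≤ kε`. -/
def RPWInf {X : Type*} [MetricSpace X] [MeasurableSpace X] (k : ℝ)
    (μ ν : Measure X) : ℝ :=
  sInf { ε : ℝ | ε ∈ Set.Icc (0:ℝ) 1 ∧ partialWInf (1 - ε) μ ν ≤ k * ε }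

/-- The Lévy–Prokhorov distance: the infimum of all `ε > 0` with
`μ(A) ≤ ν(A^ε) + ε` and `ν(A) ≤ μ(A^ε) + ε` for all Borel sets `A`, where
`A^ε = {x : c(x, A) < ε}` is the open `ε`-thickening of `A`. -/
def LPdist {X : Type*} [MetricSpace X] [MeasurableSpace X] (μ ν : Measure X) : ℝ :=
  sInf { ε : ℝ | 0 < ε ∧ ∀ A : Set X, MeasurableSet A →
    μ A ≤ ν (Metric.thickening ε A) + ENNReal.ofReal ε ∧
    ν A ≤ μ (Metric.thickening ε A) + ENNReal.ofReal ε }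

theorem aux_hall {ι : Type} [Fintype ι] [DecidableEq ι] (R : ι → ι → Prop) [DecidableRel R]
    (A B : ι → ℕ) (D : ℕ)
    (hall : ∀ I : Finset ι, I.Nonempty → ∑ i ∈ I, A i ≤
      ∑ j ∈ Finset.univ.filter (fun j => ∃ i ∈ I, R i j), B j + D) :
    ∃ c : ι → ι → ℕ, (∀ i j, c i j ≠ 0 → R i j) ∧ (∀ i, ∑ j, c i j ≤ A i) ∧
      (∀ j, ∑ i, c i j ≤ B j) ∧ ∑ i, A i ≤ ∑ i, ∑ j, c i j + D := by
  classical
  let r : (Σ i, Fin (A i)) → ((Σ j, Fin (B j)) ⊕ Fin D) → Prop := fun x y => ∀ z, y = Sum.inl z → R x.1 z.1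
  have key : ∀ S : Finset (Σ i, Fin (A i)), S.card ≤ (Finset.univ.filter (fun b => ∃ a ∈ S, r a b)).card := by
    intro S
    rcases S.eq_empty_or_nonempty with rfl | hS
    · simp
    have h1 : S.card ≤ ∑ i ∈ S.image Sigma.fst, A i := by
      have : S ⊆ (S.image Sigma.fst).sigma (fun i => (Finset.univ : Finset (Fin (A i)))) := by
        intro x hx
        simp only [Finset.mem_sigma, Finset.mem_univ, and_true]
        exact Finset.mem_image_of_mem _ hx
      simpa using Finset.card_le_card this
    refine h1.trans ((hall _ (hS.image _)).trans ?_)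
    have h2 : ((Finset.univ.filter (fun j => ∃ i ∈ S.image Sigma.fst, R i j)).sigma
        (fun j => (Finset.univ : Finset (Fin (B j))))).disjSum (Finset.univ : Finset (Fin D))
        ⊆ (Finset.univ.filter (fun b => ∃ a ∈ S, r a b)) := by
      intro y hy
      rcases y with z | d
      · simp only [Finset.inl_mem_disjSum, Finset.mem_sigma, Finset.mem_filter, Finset.mem_univ,
          true_and, and_true, Finset.mem_image] at hy
        obtain ⟨i, ⟨a, ha, rfl⟩, hR⟩ := hy
        simp only [Finset.mem_filter, Finset.mem_univ, true_and]
        refine ⟨a, ha, ?_⟩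
        intro z' hz'
        cases hz'
        exact hR
      · obtain ⟨a, ha⟩ := hS
        simp only [Finset.mem_filter, Finset.mem_univ, true_and]
        refine ⟨a, ha, ?_⟩
        intro z' hz'
        cases hz'
    have h4 := Finset.card_le_card h2
    rw [Finset.card_disjSum, Finset.card_sigma] at h4
    simpa only [Finset.card_univ, Fintype.card_fin] using h4
  obtain ⟨F, hF, hr⟩ := (Fintype.all_card_le_filter_rel_iff_exists_injective r).1 key
  let g : (Σ i, Fin (A i)) → Option ι := fun x => (F x).elim (fun z => some z.1) (fun _ => none)
  have hg : ∀ x j, g x = some j → ∃ k, F x = Sum.inl ⟨j, k⟩ := by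
    intro x j h
    simp only [g] at h
    rcases hx : F x with z | d
    · rw [hx] at h
      simp only [Sum.elim_inl, Option.some.injEq] at h
      subst h
      exact ⟨z.2, rfl⟩
    · rw [hx] at h
      simp at h
  have hgn : ∀ x, g x = none → ∃ k, F x = Sum.inr k := by
    intro x h
    simp only [g] at h
    rcases hx : F x with z | d
    · rw [hx] at h
      simp at h
    · exact ⟨d, rfl⟩
  have hfib : ∀ i, (Finset.univ.filter (fun x : (Σ i, Fin (A i)) => x.1 = i)).card = A i := by
    intro i
    have : (Finset.univ.filter (fun x : (Σ i, Fin (A i)) => x.1 = i))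
        = ({i} : Finset ι).sigma (fun i => (Finset.univ : Finset (Fin (A i)))) := by
      ext x
      simp
    rw [this]
    simp
  have hrow : ∀ i, (Finset.univ.filter (fun x : (Σ i, Fin (A i)) => x.1 = i)).card =
      (Finset.univ.filter (fun x : (Σ i, Fin (A i)) => x.1 = i ∧ g x = none)).card +
      ∑ j, (Finset.univ.filter (fun x : (Σ i, Fin (A i)) => x.1 = i ∧ g x = some j)).card := by
    intro i
    rw [Finset.card_eq_sum_card_fiberwise (f := g) (t := Finset.univ) (by simp),
      Fintype.sum_option]
    simp [Finset.filter_filter]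
  refine ⟨fun i j => (Finset.univ.filter (fun x : (Σ i, Fin (A i)) => x.1 = i ∧ g x = some j)).card,
    ?_, ?_, ?_, ?_⟩
  · intro i j h
    obtain ⟨x, hx⟩ := Finset.card_ne_zero.1 h
    simp only [Finset.mem_filter, Finset.mem_univ, true_and] at hx
    obtain ⟨rfl, hx⟩ := hx
    obtain ⟨k, hk⟩ := hg x j hx
    exact hr x _ hk
  · intro i
    have := hrow i
    rw [hfib] at this
    simp only
    omega
  · intro j
    have e : ∑ i, (Finset.univ.filter (fun x : (Σ i, Fin (A i)) => x.1 = i ∧ g x = some j)).card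
        = (Finset.univ.filter (fun x : (Σ i, Fin (A i)) => g x = some j)).card := by
      rw [Finset.card_eq_sum_card_fiberwise (f := Sigma.fst) (t := Finset.univ) (by simp)]
      simp [Finset.filter_filter, and_comm]
    simp only [e]
    have h3 : ((Finset.univ.filter (fun x : (Σ i, Fin (A i)) => g x = some j)).image F).card ≤
        ((({j} : Finset ι).sigma (fun j => (Finset.univ : Finset (Fin (B j))))).disjSum
          (∅ : Finset (Fin D))).card := by
      apply Finset.card_le_card
      intro y hy
      simp only [Finset.mem_image, Finset.mem_filter, Finset.mem_univ, true_and] at hy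
      obtain ⟨x, hx, rfl⟩ := hy
      obtain ⟨k, hk⟩ := hg x j hx
      rw [hk]
      simp [Finset.inl_mem_disjSum, Finset.inr_mem_disjSum]
    rw [Finset.card_image_of_injective _ hF] at h3
    simpa using h3
  · have e : ∑ i, A i = ∑ i, (Finset.univ.filter (fun x : (Σ i, Fin (A i)) => x.1 = i ∧ g x = none)).card +
        ∑ i, ∑ j, (Finset.univ.filter (fun x : (Σ i, Fin (A i)) => x.1 = i ∧ g x = some j)).card := by
      rw [← Finset.sum_add_distrib]
      exact Finset.sum_congr rfl fun i _ => by rw [← hrow, hfib]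
    have e2 : ∑ i, (Finset.univ.filter (fun x : (Σ i, Fin (A i)) => x.1 = i ∧ g x = none)).card
        = (Finset.univ.filter (fun x : (Σ i, Fin (A i)) => g x = none)).card := by
      rw [Finset.card_eq_sum_card_fiberwise (f := Sigma.fst) (t := Finset.univ) (by simp)]
      simp [Finset.filter_filter, and_comm]
    have h3 : ((Finset.univ.filter (fun x : (Σ i, Fin (A i)) => g x = none)).image F).card ≤
        ((∅ : Finset (Σ j, Fin (B j))).disjSum (Finset.univ : Finset (Fin D))).card := by
      apply Finset.card_le_card
      intro y hy
      simp only [Finset.mem_image, Finset.mem_filter, Finset.mem_univ, true_and] at hy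
      obtain ⟨x, hx, rfl⟩ := hy
      obtain ⟨k, hk⟩ := hgn x hx
      rw [hk]
      simp [Finset.inl_mem_disjSum, Finset.inr_mem_disjSum]
    rw [Finset.card_image_of_injective _ hF] at h3
    simp at h3
    simp only
    omega

theorem aux_frac {ι : Type} [Fintype ι] [DecidableEq ι] (R : ι → ι → Prop)
    (a b : ι → ℝ) (ha : ∀ i, 0 ≤ a i) (hb : ∀ i, 0 ≤ b i) (hs : ∑ i, a i = 1)
    (ε δ : ℝ) (hε : 0 ≤ ε) (hδ : 0 < δ)
    (hall : ∀ I J : Finset ι, (∀ j, (∃ i ∈ I, R i j) → j ∈ J) →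
      ∑ i ∈ I, a i ≤ ∑ j ∈ J, b j + ε) :
    ∃ f : ι → ι → ℝ, (∀ i j, 0 ≤ f i j) ∧ (∀ i j, f i j ≠ 0 → R i j) ∧
      (∀ i, ∑ j, f i j ≤ a i) ∧ (∀ j, ∑ i, f i j ≤ b j) ∧
      1 - ε - δ ≤ ∑ i, ∑ j, f i j := by
  classical
  obtain ⟨N, hN⟩ := exists_nat_gt ((2 * (Fintype.card ι : ℝ) + 1) / δ)
  have hNpos : (0:ℝ) < N := lt_of_le_of_lt (by positivity) hN
  have hN' : 2 * (Fintype.card ι : ℝ) + 1 < N * δ := (div_lt_iff₀ hδ).1 hN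
  obtain ⟨c, hc1, hc2, hc3, hc4⟩ := aux_hall R (fun i => ⌊N * a i⌋₊) (fun i => ⌊N * b i⌋₊)
    (⌈N * ε⌉₊ + Fintype.card ι) (by
      intro I _
      set J := Finset.univ.filter (fun j => ∃ i ∈ I, R i j)
      have h1 := hall I J (by intro j hj; simpa [J] using hj)
      have h2 : ∑ i ∈ I, ((⌊N * a i⌋₊ : ℕ) : ℝ) ≤ N * ∑ i ∈ I, a i := by
        rw [Finset.mul_sum]
        exact Finset.sum_le_sum fun i _ => Nat.floor_le (mul_nonneg hNpos.le (ha i))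
      have h3 : N * ∑ j ∈ J, b j ≤ ∑ j ∈ J, ((⌊N * b j⌋₊ : ℕ) : ℝ) + Fintype.card ι := by
        have : N * ∑ j ∈ J, b j ≤ ∑ j ∈ J, (((⌊N * b j⌋₊ : ℕ) : ℝ) + 1) := by
          rw [Finset.mul_sum]
          exact Finset.sum_le_sum fun i _ => (Nat.lt_floor_add_one _).le
        rw [Finset.sum_add_distrib] at this
        have h4 : (∑ j ∈ J, (1:ℝ)) ≤ Fintype.card ι := by
          simpa using Finset.card_le_univ J
        linarith
      have h5 := Nat.le_ceil ((N:ℝ) * ε)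
      have h6 := mul_le_mul_of_nonneg_left h1 hNpos.le
      rw [mul_add] at h6
      have : ((∑ i ∈ I, ⌊N * a i⌋₊ : ℕ) : ℝ) ≤
          ((∑ j ∈ J, ⌊N * b j⌋₊ + (⌈N * ε⌉₊ + Fintype.card ι) : ℕ) : ℝ) := by
        push_cast
        linarith
      exact_mod_cast this)
  refine ⟨fun i j => (c i j : ℝ) / N, fun i j => by positivity, ?_, ?_, ?_, ?_⟩
  · intro i j h
    apply hc1
    intro h0
    simp [h0] at h
  · intro i
    rw [← Finset.sum_div, div_le_iff₀ hNpos]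
    have h1 : ((∑ j, c i j : ℕ) : ℝ) ≤ (⌊N * a i⌋₊ : ℕ) := by exact_mod_cast hc2 i
    have h2 := Nat.floor_le (mul_nonneg hNpos.le (ha i))
    push_cast at h1
    linarith
  · intro i
    rw [← Finset.sum_div, div_le_iff₀ hNpos]
    have h1 : ((∑ j, c j i : ℕ) : ℝ) ≤ (⌊N * b i⌋₊ : ℕ) := by exact_mod_cast hc3 i
    have h2 := Nat.floor_le (mul_nonneg hNpos.le (hb i))
    push_cast at h1
    linarith
  · simp_rw [← Finset.sum_div]
    rw [le_div_iff₀ hNpos]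
    have h1 : ((∑ i, ⌊N * a i⌋₊ : ℕ) : ℝ) ≤
        ((∑ i, ∑ j, c i j + (⌈N * ε⌉₊ + Fintype.card ι) : ℕ) : ℝ) := by exact_mod_cast hc4
    push_cast at h1
    have h3 : N * ∑ j, a j ≤ ∑ j, ((⌊N * a j⌋₊ : ℕ) : ℝ) + Fintype.card ι := by
      have : N * ∑ j, a j ≤ ∑ j, (((⌊N * a j⌋₊ : ℕ) : ℝ) + 1) := by
        rw [Finset.mul_sum]
        exact Finset.sum_le_sum fun i _ => (Nat.lt_floor_add_one _).le
      rw [Finset.sum_add_distrib] at this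
      simpa using this
    rw [hs] at h3
    have h5 := Nat.ceil_lt_add_one (mul_nonneg hNpos.le hε)
    nlinarith

theorem aux_partition {X : Type*} [MetricSpace X] [CompactSpace X] [MeasurableSpace X]
    [BorelSpace X] (δ : ℝ) (hδ : 0 < δ) :
    ∃ (n : ℕ) (P : Fin n → Set X), (∀ i, MeasurableSet (P i)) ∧
      Pairwise (Function.onFun Disjoint P) ∧ (⋃ i, P i) = Set.univ ∧
      ∀ i, ∀ x ∈ P i, ∀ y ∈ P i, dist x y < δ := by
  obtain ⟨t, -, ht, hcov⟩ := (isCompact_univ (X := X)).finite_cover_balls (half_pos hδ)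
  obtain ⟨n, f, hf⟩ := ht.fin_param
  let B : Fin n → Set X := fun i => Metric.ball (f i) (δ / 2)
  refine ⟨n, disjointed B, ?_, disjoint_disjointed B, ?_, ?_⟩
  · intro i
    exact disjointedRec (p := MeasurableSet) (fun _ _ h => h.diff measurableSet_ball)
      measurableSet_ball
  · rw [iUnion_disjointed, Set.eq_univ_iff_forall]
    intro x
    have := hcov (Set.mem_univ x)
    simp only [Set.mem_iUnion] at this ⊢
    obtain ⟨y, hy, hx⟩ := this
    rw [← hf.2] at hy
    obtain ⟨i, rfl⟩ := hy
    exact ⟨i, hx⟩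
  · intro i x hx y hy
    have h1 : dist x (f i) < δ / 2 := disjointed_subset B i hx
    have h2 : dist y (f i) < δ / 2 := disjointed_subset B i hy
    have := dist_triangle_right x y (f i)
    linarith

open ProbabilityTheory in
theorem aux_marg {X : Type*} [MeasurableSpace X] (μ : Measure X) [IsProbabilityMeasure μ]
    {n : ℕ} (P : Fin n → Set X) (hPm : ∀ i, MeasurableSet (P i))
    (hPd : Pairwise (Function.onFun Disjoint P)) (w : Fin n → ENNReal)
    (hw : ∀ i, w i ≤ μ (P i)) (s : Set X) (hs : MeasurableSet s) :
    ∑ i, w i * (μ[|P i]) s ≤ μ s := by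
  calc ∑ i, w i * (μ[|P i]) s ≤ ∑ i, μ (P i ∩ s) := by
        refine Finset.sum_le_sum fun i _ => ?_
        rw [← cond_mul_eq_inter (hPm i), mul_comm]
        gcongr
        exact hw i
    _ = μ (⋃ i, P i ∩ s) := by
        rw [measure_iUnion, tsum_fintype]
        · intro i j hij
          exact (hPd hij).mono Set.inter_subset_left Set.inter_subset_left
        · exact fun i => (hPm i).inter hs
    _ ≤ μ s := measure_mono (Set.iUnion_subset fun i => Set.inter_subset_right)

open ProbabilityTheory in
theorem aux_plan {X : Type*} [MetricSpace X] [CompactSpace X] [MeasurableSpace X] [BorelSpace X]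
    (μ ν : Measure X) [IsProbabilityMeasure μ] [IsProbabilityMeasure ν] (ε δ : ℝ)
    (hε : 0 ≤ ε) (hδ : 0 < δ)
    (h : ∀ A : Set X, MeasurableSet A →
      μ A ≤ ν (Metric.thickening ε A) + ENNReal.ofReal ε) :
    ∃ γ : Measure (X × X), IsPartialPlan μ ν (1 - ε - δ) γ ∧
      ∀ᵐ z ∂γ, dist z.1 z.2 ≤ ε + δ := by
  classical
  obtain ⟨n, P, hPm, hPd, hPu, hPs⟩ := aux_partition (X := X) (δ / 2) (half_pos hδ)
  let R : Fin n → Fin n → Prop := fun i j => ∃ x ∈ P i, ∃ y ∈ P j, dist y x < ε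
  have hsum : ∀ (ρ : Measure X) [IsProbabilityMeasure ρ] (I : Finset (Fin n)),
      ρ (⋃ i ∈ I, P i) = ENNReal.ofReal (∑ i ∈ I, ρ.real (P i)) := by
    intro ρ _ I
    rw [measure_biUnion_finset (fun i _ j _ hij => hPd hij) (fun i _ => hPm i),
      ENNReal.ofReal_sum_of_nonneg (fun i _ => measureReal_nonneg)]
    exact Finset.sum_congr rfl fun i _ => (ofReal_measureReal).symm
  obtain ⟨f, hf0, hfR, hf1, hf2, hf3⟩ := aux_frac R (fun i => μ.real (P i))
    (fun i => ν.real (P i)) (fun i => measureReal_nonneg) (fun i => measureReal_nonneg)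
    (by
      have := hsum μ Finset.univ
      simp only [Finset.mem_univ, Set.iUnion_true, hPu, measure_univ] at this
      exact (ENNReal.ofReal_eq_one.1 this.symm)) ε δ hε hδ (by
      intro I J hJ
      have h1 := h (⋃ i ∈ I, P i) (Finset.measurableSet_biUnion _ fun i _ => hPm i)
      have h2 : Metric.thickening ε (⋃ i ∈ I, P i) ⊆ ⋃ j ∈ J, P j := by
        intro y hy
        rw [Metric.mem_thickening_iff] at hy
        obtain ⟨x, hx, hxy⟩ := hy
        simp only [Set.mem_iUnion, exists_prop] at hx
        obtain ⟨i, hi, hx⟩ := hx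
        have : y ∈ ⋃ i, P i := hPu ▸ Set.mem_univ y
        obtain ⟨j, hj⟩ := Set.mem_iUnion.1 this
        simp only [Set.mem_iUnion, exists_prop]
        exact ⟨j, hJ j ⟨i, hi, x, hx, y, hj, hxy⟩, hj⟩
      have h3 := h1.trans (add_le_add_left (measure_mono h2) _)
      have h4 : 0 ≤ ∑ j ∈ J, ν.real (P j) := Finset.sum_nonneg fun i _ => measureReal_nonneg
      rw [hsum, hsum, ← ENNReal.ofReal_add h4 hε,
        ENNReal.ofReal_le_ofReal_iff (add_nonneg h4 hε)] at h3
      exact h3)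
  let γ : Measure (X × X) :=
    ∑ i, ∑ j, ENNReal.ofReal (f i j) • (μ[|P i]).prod (ν[|P j])
  have hγ : ∀ s t : Set X, γ (s ×ˢ t) =
      ∑ i, ∑ j, ENNReal.ofReal (f i j) * ((μ[|P i]) s * (ν[|P j]) t) := by
    intro s t
    simp [γ, Measure.finsetSum_apply, Measure.prod_prod]
  have hw1 : ∀ i, ∑ j, ENNReal.ofReal (f i j) ≤ μ (P i) := by
    intro i
    rw [← ENNReal.ofReal_sum_of_nonneg (fun j _ => hf0 i j), ← ofReal_measureReal]
    exact ENNReal.ofReal_le_ofReal (hf1 i)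
  have hw2 : ∀ j, ∑ i, ENNReal.ofReal (f i j) ≤ ν (P j) := by
    intro i
    rw [← ENNReal.ofReal_sum_of_nonneg (fun j _ => hf0 j i), ← ofReal_measureReal]
    exact ENNReal.ofReal_le_ofReal (hf2 i)
  have hm1 : γ.map Prod.fst ≤ μ := by
    refine Measure.le_iff.2 fun s hs => ?_
    rw [Measure.map_apply measurable_fst hs, ← Set.prod_univ, hγ]
    refine le_trans ?_ (aux_marg μ P hPm hPd _ hw1 s hs)
    refine Finset.sum_le_sum fun i _ => ?_
    rw [Finset.sum_mul]
    refine Finset.sum_le_sum fun j _ => ?_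
    gcongr
    exact mul_le_of_le_one_right' prob_le_one
  have hm2 : γ.map Prod.snd ≤ ν := by
    refine Measure.le_iff.2 fun s hs => ?_
    rw [Measure.map_apply measurable_snd hs, ← Set.univ_prod, hγ, Finset.sum_comm]
    refine le_trans ?_ (aux_marg ν P hPm hPd _ hw2 s hs)
    refine Finset.sum_le_sum fun i _ => ?_
    rw [Finset.sum_mul]
    refine Finset.sum_le_sum fun j _ => ?_
    gcongr
    exact mul_le_of_le_one_left' prob_le_one
  have hmass : ENNReal.ofReal (1 - ε - δ) ≤ γ Set.univ := by
    rw [← Set.univ_prod_univ, hγ]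
    refine (ENNReal.ofReal_le_ofReal hf3).trans ?_
    rw [ENNReal.ofReal_sum_of_nonneg (fun i _ => Finset.sum_nonneg fun j _ => hf0 i j)]
    refine Finset.sum_le_sum fun i _ => ?_
    rw [ENNReal.ofReal_sum_of_nonneg (fun j _ => hf0 i j)]
    refine Finset.sum_le_sum fun j _ => ?_
    by_cases h0 : ENNReal.ofReal (f i j) = 0
    · simp [h0]
    have p1 : μ (P i) ≠ 0 := fun hz => h0 (by
      have := (Finset.single_le_sum (f := fun j => ENNReal.ofReal (f i j))
        (fun _ _ => zero_le) (Finset.mem_univ j)).trans (hw1 i)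
      simpa [hz] using this)
    have p2 : ν (P j) ≠ 0 := fun hz => h0 (by
      have := (Finset.single_le_sum (f := fun i => ENNReal.ofReal (f i j))
        (fun _ _ => zero_le) (Finset.mem_univ i)).trans (hw2 j)
      simpa [hz] using this)
    have := cond_isProbabilityMeasure p1
    have := cond_isProbabilityMeasure p2
    simp
  have hfin : γ Set.univ ≤ 1 := by
    have := hm1 Set.univ
    rwa [Measure.map_apply measurable_fst MeasurableSet.univ, Set.preimage_univ,
      measure_univ (μ := μ)] at this
  have hae : ∀ᵐ z ∂γ, dist z.1 z.2 ≤ ε + δ := by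
    have hmeas : MeasurableSet {z : X × X | ¬ dist z.1 z.2 ≤ ε + δ} := by
      apply MeasurableSet.compl (s := {z : X × X | dist z.1 z.2 ≤ ε + δ})
      exact measurableSet_le measurable_dist measurable_const
    rw [ae_iff]
    simp only [γ, Measure.finsetSum_apply, Measure.smul_apply, smul_eq_mul]
    refine Finset.sum_eq_zero fun i _ => Finset.sum_eq_zero fun j _ => ?_
    by_cases h0 : f i j = 0
    · simp [h0]
    obtain ⟨x, hx, y, hy, hxy⟩ := hfR i j h0
    have e1 : (μ[|P i]) (P i)ᶜ = 0 := by simp [cond_apply (hPm i)]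
    have e2 : (ν[|P j]) (P j)ᶜ = 0 := by simp [cond_apply (hPm j)]
    have : {z : X × X | ¬ dist z.1 z.2 ≤ ε + δ} ⊆
        ((P i)ᶜ ×ˢ Set.univ) ∪ (Set.univ ×ˢ (P j)ᶜ) := by
      intro z hz
      by_contra hcon
      simp only [Set.mem_union, Set.mem_prod, Set.mem_compl_iff, Set.mem_univ, and_true,
        true_and, not_or, not_not] at hcon
      apply hz
      have d1 := hPs i z.1 hcon.1 x hx
      have d2 := hPs j y hy z.2 hcon.2
      have t1 := dist_triangle4 z.1 x y z.2
      rw [dist_comm x y] at t1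
      linarith
    rw [measure_mono_null this (measure_union_null (by simp [Measure.prod_prod, e1])
      (by simp [Measure.prod_prod, e2])), mul_zero]
  -- rescale
  by_cases hz : γ Set.univ = 0
  · refine ⟨γ, ⟨?_, hm1, hm2⟩, hae⟩
    rw [hz] at hmass ⊢
    exact (le_antisymm hmass zero_le).symm
  have hnt : γ Set.univ ≠ ⊤ := ne_top_of_le_ne_top ENNReal.one_ne_top hfin
  let k := ENNReal.ofReal (1 - ε - δ) / γ Set.univ
  have hk : k ≤ 1 := ENNReal.div_le_of_le_mul (by simpa using hmass)
  have hkγ : k • γ ≤ γ := by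
    refine Measure.le_iff.2 fun s _ => ?_
    simpa using mul_le_of_le_one_left' hk
  refine ⟨k • γ, ⟨?_, ?_, ?_⟩, ?_⟩
  · simp only [Measure.smul_apply, smul_eq_mul, k]
    exact ENNReal.div_mul_cancel hz hnt
  · exact (Measure.map_mono hkγ measurable_fst).trans hm1
  · exact (Measure.map_mono hkγ measurable_snd).trans hm2
  · exact (Measure.absolutelyContinuous_of_le hkγ).ae_le hae

theorem aux_thick {X : Type*} [MeasurableSpace X] (μ ν : Measure X)
    [IsProbabilityMeasure μ] [IsProbabilityMeasure ν] (γ : Measure (X × X)) (ε : ℝ)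
    (hε1 : ε ≤ 1) (hε0 : 0 ≤ ε)
    (p q : X × X → X) (hp : Measurable p) (hq : Measurable q)
    (h0 : γ Set.univ = ENNReal.ofReal (1 - ε)) (h1 : γ.map p ≤ μ) (h2 : γ.map q ≤ ν)
    (A T : Set X) (hA : MeasurableSet A) (hT : MeasurableSet T)
    (hae : ∀ᵐ z ∂γ, p z ∈ A → q z ∈ T) :
    μ A ≤ ν T + ENNReal.ofReal ε := by
  have hfin : IsFiniteMeasure γ := ⟨by rw [h0]; exact ENNReal.ofReal_lt_top⟩
  have a1 : γ (p ⁻¹' Aᶜ) ≤ μ Aᶜ := by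
    have := h1 Aᶜ
    rwa [Measure.map_apply hp hA.compl] at this
  have a2 : γ (q ⁻¹' T) ≤ ν T := by
    have := h2 T
    rwa [Measure.map_apply hq hT] at this
  have a3 : γ (p ⁻¹' A) ≤ γ (q ⁻¹' T) := measure_mono_ae hae
  have a4 : γ (p ⁻¹' A) + γ (p ⁻¹' Aᶜ) = ENNReal.ofReal (1 - ε) := by
    rw [← h0]
    exact measure_add_measure_compl (hp hA)
  have a5 : μ A + μ Aᶜ = 1 := by rw [measure_add_measure_compl hA, measure_univ]
  have a6 : ENNReal.ofReal (1 - ε) + ENNReal.ofReal ε = 1 := by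
    rw [← ENNReal.ofReal_add (by linarith) hε0]
    simp
  have hne : μ Aᶜ ≠ ⊤ := measure_ne_top _ _
  refine (ENNReal.add_le_add_iff_right hne).1 ?_
  rw [a5, ← a6, ← a4]
  calc γ (p ⁻¹' A) + γ (p ⁻¹' Aᶜ) + ENNReal.ofReal ε
      ≤ ν T + μ Aᶜ + ENNReal.ofReal ε := by
        gcongr
        exact a3.trans a2
    _ = ν T + ENNReal.ofReal ε + μ Aᶜ := by ring

theorem aux_cost_nonneg {X : Type*} [MetricSpace X] [MeasurableSpace X] (α : ℝ)
    (μ ν : Measure X) :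
    BddBelow { c : ℝ | ∃ γ : Measure (X × X), IsPartialPlan μ ν α γ ∧ c = planCostInf γ } := by
  refine ⟨0, ?_⟩
  rintro c ⟨γ, -, rfl⟩
  exact ENNReal.toReal_nonneg

theorem aux_W_le {X : Type*} [MetricSpace X] [MeasurableSpace X] (α c : ℝ) (hc : 0 ≤ c)
    (μ ν : Measure X) (γ : Measure (X × X)) (hγ : IsPartialPlan μ ν α γ)
    (h : ∀ᵐ z ∂γ, dist z.1 z.2 ≤ c) : partialWInf α μ ν ≤ c := by
  refine (csInf_le (aux_cost_nonneg α μ ν) ⟨γ, hγ, rfl⟩).trans ?_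
  refine ENNReal.toReal_le_of_le_ofReal hc ?_
  refine essSup_le_of_ae_le _ ?_
  filter_upwards [h] with z hz
  exact ENNReal.ofReal_le_ofReal hz

/-- For any Borel probability measures `μ, ν` on a compact metric
space of unit diameter, `RPW_{∞,1}(μ, ν)` equals the Lévy–Prokhorov distance. -/
theorem rpwInf_eq_levyProkhorov
    {X : Type*} [MetricSpace X] [CompactSpace X] [MeasurableSpace X] [BorelSpace X]
    (hdiam : ∀ a b : X, dist a b ≤ 1)
    (μ ν : Measure X) [IsProbabilityMeasure μ] [IsProbabilityMeasure ν] :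
    RPWInf 1 μ ν = LPdist μ ν := by
  have hbdd : BddBelow { ε : ℝ | ε ∈ Set.Icc (0:ℝ) 1 ∧ partialWInf (1 - ε) μ ν ≤ 1 * ε } :=
    ⟨0, fun ε h => h.1.1⟩
  have hone : (1:ℝ) ∈ { ε : ℝ | ε ∈ Set.Icc (0:ℝ) 1 ∧ partialWInf (1 - ε) μ ν ≤ 1 * ε } := by
    refine ⟨⟨zero_le_one, le_rfl⟩, ?_⟩
    refine aux_W_le _ _ (by norm_num) μ ν 0 ⟨by simp, ?_, ?_⟩ (by simp)
    · simp [Measure.zero_le]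
    · simp [Measure.zero_le]
  have hLPne : { ε : ℝ | 0 < ε ∧ ∀ A : Set X, MeasurableSet A →
      μ A ≤ ν (Metric.thickening ε A) + ENNReal.ofReal ε ∧
      ν A ≤ μ (Metric.thickening ε A) + ENNReal.ofReal ε }.Nonempty := by
    refine ⟨1, one_pos, fun A _ => ⟨?_, ?_⟩⟩
    · exact prob_le_one.trans (by simp)
    · exact prob_le_one.trans (by simp)
  apply le_antisymm
  · refine le_csInf hLPne ?_
    rintro ε ⟨hε, h⟩
    refine le_of_forall_pos_le_add fun δ hδ => ?_
    by_cases h1 : 1 ≤ ε + δ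
    · exact (csInf_le hbdd hone).trans h1
    push Not at h1
    obtain ⟨γ, hγ, hae⟩ := aux_plan μ ν ε δ hε.le hδ (fun A hA => (h A hA).1)
    refine csInf_le hbdd ⟨⟨by linarith, h1.le⟩, ?_⟩
    rw [one_mul]
    refine aux_W_le _ _ (by linarith) μ ν γ ?_ hae
    rwa [← sub_sub]
  · refine le_csInf ⟨1, hone⟩ ?_
    rintro ε ⟨⟨hε0, hε1⟩, h⟩
    rw [one_mul] at h
    refine le_of_forall_pos_le_add fun δ hδ => ?_
    have hne : { c : ℝ | ∃ γ : Measure (X × X),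
        IsPartialPlan μ ν (1 - ε) γ ∧ c = planCostInf γ }.Nonempty := by
      have hle : ENNReal.ofReal (1 - ε) ≤ 1 := by
        rw [ENNReal.ofReal_le_one]
        linarith
      refine ⟨_, ENNReal.ofReal (1 - ε) • μ.prod ν, ⟨by simp, ?_, ?_⟩, rfl⟩
      · refine Measure.le_iff.2 fun s hs => ?_
        rw [Measure.map_apply measurable_fst hs, ← Set.prod_univ]
        simpa [Measure.prod_prod] using mul_le_of_le_one_left' hle
      · refine Measure.le_iff.2 fun s hs => ?_
        rw [Measure.map_apply measurable_snd hs, ← Set.univ_prod]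
        simpa [Measure.prod_prod] using mul_le_of_le_one_left' hle
    obtain ⟨c, ⟨γ, ⟨h0, hm1, hm2⟩, rfl⟩, hc⟩ :=
      exists_lt_of_csInf_lt hne (lt_of_le_of_lt h (lt_add_of_pos_right ε hδ))
    have hae : ∀ᵐ z ∂γ, dist z.1 z.2 < ε + δ := by
      have htop : essSup (fun z : X × X => ENNReal.ofReal (dist z.1 z.2)) γ ≠ ⊤ := by
        refine ne_top_of_le_ne_top ENNReal.one_ne_top (essSup_le_of_ae_le _ ?_)
        refine Filter.Eventually.of_forall fun z => ?_
        exact ENNReal.ofReal_le_one.2 (hdiam _ _)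
      filter_upwards [ENNReal.ae_le_essSup
        (fun z : X × X => ENNReal.ofReal (dist z.1 z.2))] with z hz
      refine lt_of_le_of_lt ?_ hc
      rw [planCostInf, ← ENNReal.ofReal_le_iff_le_toReal htop]
      exact hz
    refine csInf_le ⟨0, fun ε h => h.1.le⟩ ⟨by linarith, fun A hA => ⟨?_, ?_⟩⟩
    · refine (aux_thick μ ν γ ε hε1 hε0 Prod.fst Prod.snd measurable_fst measurable_snd h0 hm1 hm2
        A (Metric.thickening (ε + δ) A) hA Metric.isOpen_thickening.measurableSet ?_).trans ?_
      · filter_upwards [hae] with z hz hzA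
        rw [Metric.mem_thickening_iff]
        exact ⟨z.1, hzA, by rwa [dist_comm]⟩
      · gcongr
        linarith
    · refine (aux_thick ν μ γ ε hε1 hε0 Prod.snd Prod.fst measurable_snd measurable_fst h0 hm2 hm1
        A (Metric.thickening (ε + δ) A) hA Metric.isOpen_thickening.measurableSet ?_).trans ?_
      · filter_upwards [hae] with z hz hzA
        rw [Metric.mem_thickening_iff]
        exact ⟨z.2, hzA, hz⟩
      · gcongr
        linarith
end
end
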